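/- There exists a class of languages in [Inf G Mon Bc] that is not in [Inf G Caut_Tar Bc], and there exists a class of languages in [Inf G Mon Bc] that is not in [Inf G Caut_∞ Bc]; in fact the class {ℕ \ D | D ⊆ ℕ finite} witnesses both separations. -/

import Mathlib

open Filter Classical

namespace InfBc

/-! ### Basic notions: r.e. sets, informants, learners -/

/-- The `e`-th recursively enumerable set (via an acceptable numbering of
partial computable functions, `W e = dom φ_e`). -/
def W (e : ℕ) : Set ℕ := {x | ((Denumerable.ofNat Nat.Partrec.Code e).eval x).Dom}

/-- A language is recursively enumerable. -/
def RE (L : Set ℕ) : Prop := ∃ e, W e = L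

abbrev Datum := ℕ × Bool
abbrev Seq := List Datum
abbrev Informant := ℕ → Datum
abbrev HypSeq := ℕ → Part ℕ
/-- Learners are partial functions; all input types are coded into `ℕ`. -/
abbrev Learner := ℕ →. ℕ
abbrev Restriction := HypSeq → Informant → Prop

/-- Positive information of an infinite sequence. -/
def posI (I : Informant) : Set ℕ := {x | ∃ n, I n = (x, true)}
/-- Negative information of an infinite sequence. -/
def negI (I : Informant) : Set ℕ := {x | ∃ n, I n = (x, false)}

/-- `I` is an informant for the language `L`. -/
def IsInformant (I : Informant) (L : Set ℕ) : Prop := posI I = L ∧ negI I = Lᶜ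

/-- `I` is an informant (for some language), i.e. `I ∈ Inf`. -/
def IsInf (I : Informant) : Prop := IsInformant I (posI I)

/-- `I` is a canonical informant. -/
def Canonical (I : Informant) : Prop := ∀ x, I x = (x, true) ∨ I x = (x, false)

/-- `I[n]`, the length-`n` initial segment of `I`. -/
def segment (I : Informant) (n : ℕ) : Seq := (List.range n).map I

/-- Positive information of a finite sequence. -/
def posS (σ : Seq) : Set ℕ := {x | (x, true) ∈ σ}
/-- Negative information of a finite sequence. -/
def negS (σ : Seq) : Set ℕ := {x | (x, false) ∈ σ}
/-- The content of a finite sequence, as a set. -/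
def contentS (σ : Seq) : Set Datum := {a | a ∈ σ}

/-! ### Interaction operators -/

abbrev InteractionOperator := Learner → Informant → HypSeq

/-- Full-information (Gold-style) interaction: `G(h,I)(i) = h(I[i])`. -/
def Gop : InteractionOperator := fun h I i => h (Encodable.encode (segment I i))

/-- Set-driven interaction: `Sd(h,I)(i) = h(content(I[i]))`. -/
def Sdop : InteractionOperator := fun h I i => h (Encodable.encode (segment I i).toFinset)

/-- The iterated evaluation of an iterative learner on a finite sequence:
start with the initial hypothesis `h(none)` and feed the data one by one. -/
def iterExtend (h : Learner) (σ : Seq) : Part ℕ :=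
  σ.foldl (fun pe a => pe.bind fun e => h (Encodable.encode (some (e, a))))
    (h (Encodable.encode (none : Option (ℕ × Datum))))

/-- Iterative interaction: `It(h,I)(i)` is obtained by feeding `I[i]` one datum
at a time, each time updating the previous hypothesis. -/
def Itop : InteractionOperator := fun h I i => iterExtend h (segment I i)

/-- An iterative learner is confluent if the order and multiplicity in which
the content is presented does not matter. -/
def ConfluentLearner (h : Learner) : Prop :=
  ∀ σ τ : Seq, contentS σ = contentS τ → iterExtend h σ = iterExtend h τ

/-- Confluently iterative interaction. -/
noncomputable def CflItop : InteractionOperator := fun h I i =>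
  if ConfluentLearner h then iterExtend h (segment I i) else Part.none

/-- `β ≼ β'`: every (partial computable) `β`-learner can be translated into a
`β'`-learner with the same hypothesis sequence on every informant. -/
def OpLe (β β' : InteractionOperator) : Prop :=
  ∀ h : Learner, Partrec h → ∃ h' : Learner, Partrec h' ∧
    ∀ I : Informant, IsInf I → ∀ n, β h I n = β' h' I n

/-! ### Learning restrictions -/

/-- The trivial restriction `T`. -/
def TT : Restriction := fun _ _ => True

/-- Explanatory identification. -/
def Ex : Restriction := fun p I =>
  ∃ q, W q = posI I ∧ ∀ᶠ n in atTop, p n = Part.some q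

/-- Behaviorally correct identification. -/
def Bc : Restriction := fun p I => ∀ᶠ n in atTop, ∃ e ∈ p n, W e = posI I

/-- Consistency of a hypothesis with a finite sequence of data. -/
def ConsH (e : ℕ) (σ : Seq) : Prop := posS σ ⊆ W e ∧ negS σ ∩ W e = ∅

/-- Consistency of a hypothesis sequence with an informant. -/
def Cons : Restriction := fun p I => ∀ n, ∃ e ∈ p n, ConsH e (segment I n)

/-- Strongly monotone. -/
def SMon : Restriction := fun p _ =>
  ∀ s t, s ≤ t → ∀ e ∈ p s, ∀ e' ∈ p t, W e ⊆ W e'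

/-- Dual strongly monotone. -/
def SMond : Restriction := fun p _ =>
  ∀ s t, s ≤ t → ∀ e ∈ p s, ∀ e' ∈ p t, W e' ⊆ W e

/-- Monotone. -/
def Mon : Restriction := fun p I =>
  ∀ s t, s ≤ t → ∀ e ∈ p s, ∀ e' ∈ p t, W e ∩ posI I ⊆ W e' ∩ posI I

/-- Dual monotone. -/
def Mond : Restriction := fun p I =>
  ∀ s t, s ≤ t → ∀ e ∈ p s, ∀ e' ∈ p t, (W e)ᶜ ∩ negI I ⊆ (W e')ᶜ ∩ negI I

/-- Weakly monotone. -/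
def WMon : Restriction := fun p I =>
  ∀ s t, s ≤ t → ∀ e ∈ p s, ConsH e (segment I t) → ∀ e' ∈ p t, W e ⊆ W e'

/-- Dual weakly monotone. -/
def WMond : Restriction := fun p I =>
  ∀ s t, s ≤ t → ∀ e ∈ p s, ConsH e (segment I t) → ∀ e' ∈ p t, W e' ⊆ W e

/-- Cautious. -/
def Caut : Restriction := fun p _ =>
  ∀ s t, s < t → ∀ e ∈ p s, ∀ e' ∈ p t, ¬ W e' ⊂ W e

/-- Target cautious. -/
def CautTar : Restriction := fun p I =>
  ∀ s, ∀ e ∈ p s, ¬ posI I ⊂ W e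

/-- Finitely cautious. -/
def CautFin : Restriction := fun p _ =>
  ∀ s t, s < t → ∀ e ∈ p s, ∀ e' ∈ p t, W e' ⊂ W e → (W e').Infinite

/-- Infinitely cautious. -/
def CautInf : Restriction := fun p _ =>
  ∀ s t, s < t → ∀ e ∈ p s, ∀ e' ∈ p t, W e' ⊂ W e → (W e').Finite

/-! ### Learnability -/

/-- The class of admissible learners: all partial computable learners. -/
def AllL : Learner → Prop := fun _ => True
/-- The class of admissible learners: total computable learners (`ℛ`). -/
def TotalL : Learner → Prop := fun h => ∀ x, (h x).Dom
/-- Admissible informants: all informants (`Inf`). -/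
def AllI : Informant → Prop := fun _ => True

/-- `h` learns `L` in the setting given by admissible informants `P`,
interaction operator `β` and local restriction `δ`. -/
def LearnsWith (P : Informant → Prop) (β : InteractionOperator) (δ : Restriction)
    (h : Learner) (L : Set ℕ) : Prop :=
  RE L ∧ ∀ I : Informant, P I → IsInformant I L → δ (β h I) I

/-- `[τ(α) C P β δ]`: the collection of all classes of languages learnable by
some learner in `C` that satisfies the global restriction `α` on all admissible
informants, under interaction operator `β` and local restriction `δ`. -/
def Learnable (α : Restriction) (C : Learner → Prop) (P : Informant → Prop)
    (β : InteractionOperator) (δ : Restriction) : Set (Set (Set ℕ)) :=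
  {𝓛 | ∃ h : Learner, Partrec h ∧ C h ∧
        (∀ I : Informant, IsInf I → P I → α (β h I) I) ∧
        ∀ L ∈ 𝓛, LearnsWith P β δ h L}

/-! ### Properties of restrictions -/

/-- A learning restriction is delayable if it is preserved under postponing
hypotheses along a non-decreasing unbounded function. -/
def Delayable (δ : Restriction) : Prop :=
  ∀ I I' : Informant, IsInf I → IsInf I' → Set.range I = Set.range I' →
    ∀ (p : HypSeq) (s : ℕ → ℕ), Monotone s → (∀ m, ∃ n, m ≤ s n) →
      δ p I → (∀ n, contentS (segment I (s n)) ⊆ contentS (segment I' n)) →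
      δ (fun n => p (s n)) I'

/-- A learning restriction is semantic if it is indifferent to replacing the
hypothesis sequence by a semantically equivalent one. -/
def Semantic (δ : Restriction) : Prop :=
  ∀ (p p' : HypSeq) (I : Informant), δ p I →
    (∀ i, (p i).Dom ↔ (p' i).Dom) →
    (∀ i, ∀ e ∈ p i, ∀ e' ∈ p' i, W e = W e') →
    δ p' I


/-- Membership of a negative datum in a coded sequence is computable, hence there is a computable
translation of coded sequences into indices for the complement of their negative part. -/
theorem exists_index : ∃ f : ℕ → ℕ, Computable f ∧
    ∀ σ : Seq, W (f (Encodable.encode σ)) = {x | (x, false) ∉ σ} := by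
  have hmem : PrimrecRel fun (L : Seq) (b : Datum) => ∃ a ∈ L, a = b :=
    PrimrecRel.exists_mem_list Primrec.eq
  have hg : Primrec fun n : ℕ => ((Encodable.decode n.unpair.1 : Option Seq).getD []) :=
    Primrec.option_getD.comp (Primrec.decode.comp (Primrec.fst.comp Primrec.unpair))
      (Primrec.const [])
  have hx : Primrec fun n : ℕ => ((n.unpair.2, false) : Datum) :=
    Primrec.pair (Primrec.snd.comp Primrec.unpair) (Primrec.const false)
  have hp : PrimrecPred fun n : ℕ => ¬ ∃ a ∈ ((Encodable.decode n.unpair.1 : Option Seq).getD []),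
      a = ((n.unpair.2, false) : Datum) :=
    (hmem.comp hg hx).not
  have hre := (PrimrecPred.computablePred hp).to_re
  have hF := hre.map ((Computable.const 0).to₂ : Computable₂ fun (_ : ℕ) (_ : Unit) => (0 : ℕ))
  obtain ⟨c, hc⟩ := Nat.Partrec.Code.exists_code.1 (Partrec.nat_iff.1 hF)
  refine ⟨fun a => Encodable.encode (Nat.Partrec.Code.curry c a), ?_, ?_⟩
  · exact Computable.encode.comp
      ((Nat.Partrec.Code.primrec₂_curry.comp (Primrec.const c) Primrec.id).to_comp)
  · intro σ
    ext x
    simp [W, Nat.Partrec.Code.eval_curry, hc, Part.assert]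

theorem mem_segment (I : Informant) (n : ℕ) (d : Datum) :
    d ∈ segment I n ↔ ∃ i < n, I i = d := by
  simp [segment]

/-- The canonical informant for the complement of `D`. -/
noncomputable def can (D : Set ℕ) : Informant := fun i => (i, decide (i ∉ D))

theorem can_isInformant (D : Set ℕ) : IsInformant (can D) Dᶜ := by
  constructor
  · ext x; simp [posI, can]
  · ext x; simp [negI, can]

/-- The key step: a learner that is behaviorally correct on all cofinite languages conjectures `ℕ`
before a proper cofinite subset of `ℕ` is presented. -/
theorem key (h : Learner)
    (H : ∀ D : Set ℕ, D.Finite → Bc (Gop h (can D)) (can D)) :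
    ∃ n : ℕ, ∃ e ∈ Gop h (can {n}) n, W e = Set.univ := by
  have h0 := H ∅ Set.finite_empty
  obtain ⟨n, e, he, hW⟩ := h0.exists
  refine ⟨n, e, ?_, ?_⟩
  · have : segment (can {n}) n = segment (can ∅) n := by
      apply List.map_congr_left
      intro i hi
      have : i ≠ n := (List.mem_range.1 hi).ne
      simp [can, this]
    unfold Gop at *
    rwa [this]
  · rw [hW, (can_isInformant ∅).1, Set.compl_empty]

theorem posI_can_ssubset (n : ℕ) : posI (can {n}) ⊂ Set.univ := by
  rw [(can_isInformant {n}).1, Set.ssubset_univ_iff]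
  intro hh
  have : n ∈ ({n} : Set ℕ)ᶜ := hh ▸ Set.mem_univ n
  simp at this

theorem mon_part : {L : Set ℕ | ∃ D : Set ℕ, D.Finite ∧ L = Dᶜ} ∈
        Learnable TT AllL AllI Gop (fun p I => Mon p I ∧ Bc p I) := by
  obtain ⟨f, hf, hW⟩ := exists_index
  refine ⟨fun n => Part.some (f n), hf, trivial, fun _ _ _ => trivial, ?_⟩
  rintro L ⟨D, hD, rfl⟩
  refine ⟨⟨f (Encodable.encode (hD.toFinset.toList.map fun x => ((x, false) : Datum))), ?_⟩, ?_⟩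
  · rw [hW]; ext x; simp
  · rintro I - ⟨hpos, hneg⟩
    rw [compl_compl] at hneg
    constructor
    · intro s t _ e _ e' he' x hx
      refine ⟨?_, hx.2⟩
      simp only [Gop, Part.mem_some_iff] at he'
      rw [he', hW]
      intro hm
      obtain ⟨i, -, hi⟩ := (mem_segment _ _ _).1 hm
      have h1 : x ∈ negI I := ⟨i, hi⟩
      have h2 := hx.2
      rw [hneg] at h1
      rw [hpos] at h2
      exact h2 h1
    · have hex : ∀ x ∈ D, ∃ n, I n = (x, false) := fun x hx => by
        rw [← hneg] at hx; exact hx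
      have hev : ∀ᶠ n in atTop, ∀ x ∈ D, (x, false) ∈ segment I n := by
        rw [eventually_all_finite hD]
        intro x hx
        obtain ⟨m, hm⟩ := hex x hx
        filter_upwards [eventually_gt_atTop m] with n hn
        exact (mem_segment _ _ _).2 ⟨m, hn, hm⟩
      filter_upwards [hev] with n hn
      refine ⟨_, Part.mem_some _, ?_⟩
      rw [hW, hpos]
      ext x
      refine ⟨fun hx hxD => hx (hn x hxD), fun hx hm => hx ?_⟩
      obtain ⟨i, -, hi⟩ := (mem_segment _ _ _).1 hm
      rw [← hneg]
      exact ⟨i, hi⟩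

/-- The class of all cofinite languages is in `[Inf G Mon Bc]`
but neither in `[Inf G Caut_Tar Bc]` nor in `[Inf G Caut_∞ Bc]`. -/
theorem cautTar_and_cautInf_proper :
    {L : Set ℕ | ∃ D : Set ℕ, D.Finite ∧ L = Dᶜ} ∈
        Learnable TT AllL AllI Gop (fun p I => Mon p I ∧ Bc p I) ∧
    {L : Set ℕ | ∃ D : Set ℕ, D.Finite ∧ L = Dᶜ} ∉
        Learnable TT AllL AllI Gop (fun p I => CautTar p I ∧ Bc p I) ∧
    {L : Set ℕ | ∃ D : Set ℕ, D.Finite ∧ L = Dᶜ} ∉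
        Learnable TT AllL AllI Gop (fun p I => CautInf p I ∧ Bc p I) := by
  refine ⟨mon_part, ?_, ?_⟩
  · rintro ⟨h, -, -, -, H⟩
    have H' : ∀ D : Set ℕ, D.Finite → _ := fun D hD =>
      (H Dᶜ ⟨D, hD, rfl⟩).2 (can D) trivial (can_isInformant D)
    obtain ⟨n, e, he, hWe⟩ := key h fun D hD => (H' D hD).2
    exact (H' {n} (Set.finite_singleton n)).1 n e he (hWe ▸ posI_can_ssubset n)
  · rintro ⟨h, -, -, -, H⟩
    have H' : ∀ D : Set ℕ, D.Finite → _ := fun D hD =>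
      (H Dᶜ ⟨D, hD, rfl⟩).2 (can D) trivial (can_isInformant D)
    obtain ⟨n, e, he, hWe⟩ := key h fun D hD => (H' D hD).2
    obtain ⟨hC, hB⟩ := H' {n} (Set.finite_singleton n)
    obtain ⟨t, ⟨e', he', hWe'⟩, ht⟩ := (hB.and (eventually_gt_atTop n)).exists
    have hfin := hC n t ht e he e' he' (by rw [hWe, hWe']; exact posI_can_ssubset n)
    rw [hWe', (can_isInformant {n}).1] at hfin
    exact (Set.finite_singleton n).infinite_compl hfin

end InfBc
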